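/- arXiv:2402.17849 — 5 statements merged into one kernel-verified Lean document; each statement's English description precedes it below -/
import Mathlib

section
/- For all integers r ≥ 1 and n > r, the number D_r(n) of Dyck paths of semi-length n that have exactly r peaks of height h for every height h with 1 ≤ h ≤ (maximum height of the path) is divisible by r+1. -/
/-- The step associated to a letter: `true` is an up step `+1`, `false` a down step `-1`. -/
def stepVal (b : Bool) : ℤ := if b then 1 else -1

/-- Partial sum `S_i`: the sum of the first `i` steps of the word `w`. -/
def psum {L : ℕ} (w : Fin L → Bool) (i : ℕ) : ℤ :=
  ∑ j : Fin L, if (j : ℕ) < i then stepVal (w j) else 0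

/-- A Dyck bridge: a `±1` word whose total sum is `0`. -/
def IsBridge {L : ℕ} (w : Fin L → Bool) : Prop := psum w L = 0

/-- A Dyck path: a bridge all of whose partial sums are nonnegative. -/
def IsDyck {L : ℕ} (w : Fin L → Bool) : Prop :=
  IsBridge w ∧ ∀ i : ℕ, 0 ≤ psum w i

/-- A peak at (0-based) position `i`: step `i` is up and step `i+1` is down. -/
def IsPeak {L : ℕ} (w : Fin L → Bool) (i : ℕ) : Prop :=
  ∃ j k : Fin L, (j : ℕ) = i ∧ (k : ℕ) = i + 1 ∧ w j = true ∧ w k = false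

/-- The height of the peak at (0-based) position `i`, i.e. the altitude
reached by its up step. -/
def peakHeight {L : ℕ} (w : Fin L → Bool) (i : ℕ) : ℤ := psum w (i + 1)

/-- A crossing of the x-axis at (1-based) index `i`: `0 < i < L`, `S_i = 0`,
and the steps `w_i`, `w_{i+1}` (1-based) are equal. -/
def IsCrossing {L : ℕ} (w : Fin L → Bool) (i : ℕ) : Prop :=
  0 < i ∧ i < L ∧ psum w i = 0 ∧
    ∃ j k : Fin L, (j : ℕ) + 1 = i ∧ (k : ℕ) = i ∧ w j = w k

/-!
A path of height `t + 1` arises in exactly one way from a path `s` of height at most `t` by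
replacing the `i`-th peak `UD` of height `t` by `U (UD)^(a i) D`. The new path has `∑ a i` peaks
of height `t + 1`, one peak of height `t` for each `a i = 0`, and as many peaks as `s` at every
other height. If `s` has `N` peaks of height `t`, then the uniformly peaked paths arising from it,
if there are any, therefore correspond to the `a : Fin N → ℕ` with sum `r` and exactly `r` zeros.
With `N = r + k + 1` there are `C(N, k + 1) * C(r - 1, k)` of these, a multiple of `r + 1` because
`r * C(N, k + 1) * C(r - 1, k) = (r + 1) * C(N, r + 1) * C(r, k + 1)`. Such a level `t ≥ 1` exists
since the only Dyck path of height at most `1` is `(UD)^n`, with `n > r` peaks of height `1`.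
-/

open Finset

/-- The final altitude of the path that starts at altitude `c` and follows the steps of `l`. -/
def endHeight (c : ℤ) (l : List Bool) : ℤ := l.foldl (fun x b => x + stepVal b) c

/-- The altitudes visited by the path that starts at altitude `c` and follows the steps of `l`,
both endpoints included. -/
def heights (c : ℤ) (l : List Bool) : List ℤ := l.scanl (fun x b => x + stepVal b) c

/-- The heights of the peaks of `l` started at altitude `c`, from left to right. A peak is consumed
as a whole because the down step that closes it cannot open another one. -/
def peakHeights : ℤ → List Bool → List ℤ
  | c, true :: false :: l => (c + 1) :: peakHeights c l
  | c, b :: l => peakHeights (c + stepVal b) l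
  | _, [] => []

/-- The word `l` preceded by `k` copies of the peak `UD`. -/
def prependPeaks : ℕ → List Bool → List Bool
  | 0, l => l
  | k + 1, l => true :: false :: prependPeaks k l

/-- Replaces the `i`-th peak `UD` of height `t` of a path started at altitude `c` by
`U (UD)^(a i) D`. Missing entries of the list `a` count as `0`, spare ones are ignored. -/
def insertPeaks (t : ℤ) : ℤ → List Bool → List ℕ → List Bool
  | c, true :: false :: s, a =>
    if c + 1 = t then true :: prependPeaks (a.headD 0) (false :: insertPeaks t c s a.tail)
    else true :: false :: insertPeaks t c s a
  | c, b :: s, a => b :: insertPeaks t (c + stepVal b) s a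
  | _, [], _ => []

/-- Deletes all peaks `UD` of height `H` from a path started at altitude `c`. -/
def erasePeaks (H : ℤ) : ℤ → List Bool → List Bool
  | c, true :: false :: l =>
    if c + 1 = H then erasePeaks H c l else true :: false :: erasePeaks H c l
  | c, b :: l => b :: erasePeaks H (c + stepVal b) l
  | _, [] => []

section Heights

variable (c : ℤ) (l : List Bool)

@[simp] theorem stepVal_true : stepVal true = 1 := rfl

@[simp] theorem stepVal_false : stepVal false = -1 := rfl

@[simp] theorem endHeight_nil : endHeight c [] = c := rfl

@[simp] theorem endHeight_cons (b : Bool) :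
    endHeight c (b :: l) = endHeight (c + stepVal b) l := rfl

@[simp] theorem heights_nil : heights c [] = [c] := by simp [heights]

@[simp] theorem heights_cons (b : Bool) :
    heights c (b :: l) = c :: heights (c + stepVal b) l := by simp [heights]

@[simp] theorem self_mem_heights : c ∈ heights c l := by cases l <;> simp

theorem heights_ne_nil : heights c l ≠ [] := List.ne_nil_of_mem (self_mem_heights c l)

theorem mem_heights_iff_exists_take {x : ℤ} :
    x ∈ heights c l ↔ ∃ i ≤ l.length, endHeight c (l.take i) = x := by
  simp [heights, List.mem_iff_getElem?, List.getElem?_scanl, endHeight]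

end Heights

section PeakHeights

variable {c h : ℤ} {l : List Bool}

theorem count_peakHeights_cons (b : Bool) :
    (peakHeights c (b :: l)).count h = (peakHeights (c + stepVal b) l).count h +
      if b = true ∧ l.head? = some false ∧ c + 1 = h then 1 else 0 := by
  rcases b with _ | _ <;> rcases l with _ | ⟨_ | _, l⟩ <;> simp [peakHeights, List.count_cons]

theorem mem_heights_of_mem_peakHeights {x : ℤ} (hx : x ∈ peakHeights c l) : x ∈ heights c l := by
  fun_induction peakHeights c l <;> grind [heights_cons, stepVal_true, stepVal_false]

theorem count_peakHeights_eq_card :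
    (peakHeights c l).count h = #{i ∈ range l.length |
      l[i]? = some true ∧ l[i + 1]? = some false ∧ endHeight c (l.take (i + 1)) = h} := by
  induction l generalizing c with
  | nil => simp [peakHeights]
  | cons b l ih =>
    rw [count_peakHeights_cons, ih, List.length_cons, card_filter, card_filter, sum_range_succ']
    simp only [List.getElem?_cons_succ, List.getElem?_cons_zero, List.take_succ_cons, zero_add,
      List.take_zero, endHeight_cons, endHeight_nil, List.head?_eq_getElem?, Option.some_inj]
    congr 1
    cases b <;> simp

end PeakHeights

section PrependPeaks

variable (c : ℤ) (k : ℕ) (l : List Bool)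

theorem length_prependPeaks : (prependPeaks k l).length = l.length + 2 * k := by
  induction k with
  | zero => rfl
  | succ k ih =>
    simp only [prependPeaks, List.length_cons, ih]
    omega

theorem endHeight_prependPeaks : endHeight c (prependPeaks k l) = endHeight c l := by
  induction k <;> simp [prependPeaks, *]

theorem mem_heights_prependPeaks {x : ℤ} :
    x ∈ heights c (prependPeaks k l) ↔ x ∈ heights c l ∨ (x = c + 1 ∧ 0 < k) := by
  induction k with
  | zero => simp [prependPeaks]
  | succ k ih =>
    have := self_mem_heights c l
    simp only [prependPeaks, heights_cons, List.mem_cons, stepVal_true, stepVal_false,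
      add_neg_cancel_right, ih]
    grind

theorem peakHeights_prependPeaks :
    peakHeights c (prependPeaks k l) = List.replicate k (c + 1) ++ peakHeights c l := by
  induction k <;> simp [prependPeaks, peakHeights, List.replicate_succ, *]

theorem count_peakHeights_true_cons_prependPeaks {h : ℤ} :
    (peakHeights c (true :: prependPeaks k (false :: l))).count h = (peakHeights c l).count h +
      if h = c + 1 ∧ k = 0 then 1 else if h = c + 2 then k else 0 := by
  rw [count_peakHeights_cons, peakHeights_prependPeaks]
  cases k <;> simp only [prependPeaks, peakHeights, stepVal_true, stepVal_false, add_assoc,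
    Int.reduceAdd, Int.reduceNeg, add_neg_cancel, add_zero, List.count_append,
    List.count_replicate, beq_iff_eq, List.head?_cons] <;> grind

theorem prependPeaks_false_cons_inj {k k' : ℕ} {l l' : List Bool} :
    prependPeaks k (false :: l) = prependPeaks k' (false :: l') ↔ k = k' ∧ l = l' := by
  induction k generalizing k' <;> cases k' <;> simp [prependPeaks, *]

theorem erasePeaks_prependPeaks :
    erasePeaks (c + 1) c (prependPeaks k l) = erasePeaks (c + 1) c l := by
  induction k <;> simp [prependPeaks, erasePeaks, *]

theorem exists_eq_prependPeaks : ∀ {c : ℤ} {l : List Bool}, (∀ x ∈ heights c l, x ≤ c + 1) →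
    endHeight c l ≤ c → ∃ k l', l = prependPeaks k l' ∧ (l' = [] ∨ ∃ l'', l' = false :: l'')
  | _, [], _, _ => ⟨0, [], rfl, .inl rfl⟩
  | _, false :: l, _, _ => ⟨0, _, rfl, .inr ⟨l, rfl⟩⟩
  | _, [true], _, he => by simp at he
  | c, true :: true :: l, hl, _ => by
    have := hl (c + 2) (by simp [add_assoc])
    omega
  | c, true :: false :: l, hl, he => by
    obtain ⟨k, l', rfl, hl'⟩ := exists_eq_prependPeaks (c := c) (l := l)
      (fun x hx => hl x (by simp [hx])) (by simpa using he)
    exact ⟨k + 1, l', rfl, hl'⟩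

end PrependPeaks

section InsertPeaks

variable {t c : ℤ} {s : List Bool} {a : List ℕ}

theorem insertPeaks_true_false_cons (hc : c + 1 = t) (k : ℕ) :
    insertPeaks t c (true :: false :: s) (k :: a) =
      true :: prependPeaks k (false :: insertPeaks t c s a) := by
  simp [insertPeaks, hc]

theorem insertPeaks_cons {b : Bool} (hb : ¬(b = true ∧ s.head? = some false ∧ c + 1 = t)) :
    insertPeaks t c (b :: s) a = b :: insertPeaks t (c + stepVal b) s a := by
  rcases b with _ | _ <;> rcases s with _ | ⟨_ | _, s⟩ <;> simp_all [insertPeaks]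

theorem head?_insertPeaks : (insertPeaks t c s a).head? = s.head? := by
  fun_cases insertPeaks t c s a <;> rfl

theorem insertPeaks_induction
    {motive : ∀ c s (a : List ℕ), a.length = (peakHeights c s).count t → Prop}
    (nil : ∀ c, motive c [] [] rfl)
    (peak : ∀ c s k a (hc : c + 1 = t) (ha : a.length = (peakHeights c s).count t),
      motive c s a ha → motive c (true :: false :: s) (k :: a) (by simp [peakHeights, hc, ha]))
    (step : ∀ c b s a (hb : ¬(b = true ∧ s.head? = some false ∧ c + 1 = t))
      (ha : a.length = (peakHeights (c + stepVal b) s).count t), motive (c + stepVal b) s a ha →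
      motive c (b :: s) a (by rw [count_peakHeights_cons, if_neg hb, ha, add_zero]))
    {c : ℤ} {s : List Bool} {a : List ℕ} (ha : a.length = (peakHeights c s).count t) :
    motive c s a ha := by
  induction hn : s.length using Nat.strong_induction_on generalizing c s a with
  | _ n ih =>
    subst hn
    rcases s with _ | ⟨b, s⟩
    · obtain rfl : a = [] := by simpa [peakHeights] using ha
      exact nil c
    by_cases hb : b = true ∧ s.head? = some false ∧ c + 1 = t
    · obtain ⟨rfl, hs, rfl⟩ := hb
      obtain ⟨s, rfl⟩ := List.head?_eq_some_iff.mp hs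
      rcases a with _ | ⟨k, a⟩
      · simp [peakHeights] at ha
      have ha' : a.length = (peakHeights c s).count (c + 1) := by simpa [peakHeights] using ha
      exact peak c s k a rfl ha' (ih _ (by simp) ha' rfl)
    · have ha' : a.length = (peakHeights (c + stepVal b) s).count t := by
        rw [ha, count_peakHeights_cons, if_neg hb, add_zero]
      exact step c b s a hb ha' (ih _ (by simp) ha' rfl)

theorem endHeight_insertPeaks : endHeight c (insertPeaks t c s a) = endHeight c s := by
  fun_induction insertPeaks t c s a with
  | case1 _ _ _ _ ih => simp [endHeight_prependPeaks, ih]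
  | _ => simp [*]

theorem length_insertPeaks (ha : a.length = (peakHeights c s).count t) :
    (insertPeaks t c s a).length = s.length + 2 * a.sum := by
  induction ha using insertPeaks_induction with
  | nil => rfl
  | peak c s k a hc _ ih =>
    rw [insertPeaks_true_false_cons hc, List.length_cons, length_prependPeaks]
    simp only [List.length_cons, List.sum_cons, ih]
    omega
  | step c b s a hb _ ih =>
    simp only [insertPeaks_cons hb, List.length_cons, ih]
    omega

theorem mem_heights_insertPeaks (ha : a.length = (peakHeights c s).count t) {x : ℤ} :
    x ∈ heights c (insertPeaks t c s a) ↔ x ∈ heights c s ∨ (x = t + 1 ∧ 0 < a.sum) := by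
  induction ha using insertPeaks_induction with
  | nil => simp [insertPeaks]
  | peak c s k a hc _ ih =>
    simp only [insertPeaks_true_false_cons hc, heights_cons, List.mem_cons,
      mem_heights_prependPeaks, stepVal_true, stepVal_false, add_neg_cancel_right, ih,
      List.sum_cons]
    grind
  | step c b s a hb _ ih =>
    simp only [insertPeaks_cons hb, heights_cons, List.mem_cons, ih, or_assoc]

theorem count_peakHeights_insertPeaks (ha : a.length = (peakHeights c s).count t) (h : ℤ) :
    (peakHeights c (insertPeaks t c s a)).count h =
      if h = t then a.count 0
      else (peakHeights c s).count h + if h = t + 1 then a.sum else 0 := by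
  induction ha using insertPeaks_induction with
  | nil => simp [insertPeaks, peakHeights]
  | peak c s k a hc _ ih =>
    rw [insertPeaks_true_false_cons hc, count_peakHeights_true_cons_prependPeaks, ih]
    simp only [peakHeights, List.count_cons, List.sum_cons, beq_iff_eq]
    grind
  | step c b s a hb _ ih =>
    rw [insertPeaks_cons hb, count_peakHeights_cons, count_peakHeights_cons, head?_insertPeaks, ih]
    grind

theorem insertPeaks_injective {a' : List ℕ} (ha : a.length = (peakHeights c s).count t)
    (ha' : a'.length = (peakHeights c s).count t)
    (h : insertPeaks t c s a = insertPeaks t c s a') : a = a' := by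
  induction ha using insertPeaks_induction generalizing a' with
  | nil => simpa [peakHeights, eq_comm] using ha'
  | peak c s k a hc _ ih =>
    rcases a' with _ | ⟨k', a'⟩
    · simp [peakHeights, hc] at ha'
    rw [insertPeaks_true_false_cons hc, insertPeaks_true_false_cons hc, List.cons_inj_right,
      prependPeaks_false_cons_inj] at h
    rw [h.1, ih (by simpa [peakHeights, hc] using ha') h.2]
  | step c b s a hb _ ih =>
    rw [insertPeaks_cons hb, insertPeaks_cons hb, List.cons_inj_right] at h
    exact ih (by rwa [count_peakHeights_cons, if_neg hb, add_zero] at ha') h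

theorem erasePeaks_cons {H : ℤ} {b : Bool} {l : List Bool}
    (hb : ¬(b = true ∧ l.head? = some false ∧ c + 1 = H)) :
    erasePeaks H c (b :: l) = b :: erasePeaks H (c + stepVal b) l := by
  rcases b with _ | _ <;> rcases l with _ | ⟨_ | _, l⟩ <;> simp_all [erasePeaks]

theorem erasePeaks_insertPeaks (ha : a.length = (peakHeights c s).count t)
    (hs : t + 1 ∉ peakHeights c s) :
    erasePeaks (t + 1) c (insertPeaks t c s a) = s := by
  induction ha using insertPeaks_induction with
  | nil => rfl
  | peak c s k a hc _ ih =>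
    subst hc
    have := erasePeaks_prependPeaks (c + 1) k (false :: insertPeaks (c + 1) c s a)
    rw [insertPeaks_true_false_cons rfl, erasePeaks_cons (by simp), stepVal_true, this,
      erasePeaks_cons (by simp), stepVal_false, add_neg_cancel_right,
      ih (by simp_all [peakHeights])]
  | step c b s a hb _ ih =>
    rw [← List.count_eq_zero, count_peakHeights_cons] at hs
    rw [insertPeaks_cons hb, erasePeaks_cons (by rw [head?_insertPeaks]; grind),
      ih (by rw [← List.count_eq_zero]; omega)]

theorem exists_insertPeaks_eq {c : ℤ} {l : List Bool} (hc : c < t)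
    (hl : ∀ x ∈ heights c l, x ≤ t + 1) (he : endHeight c l < t) :
    ∃ s a, insertPeaks t c s a = l ∧ a.length = (peakHeights c s).count t ∧
      ∀ x ∈ heights c s, x ≤ t := by
  induction hn : l.length using Nat.strong_induction_on generalizing c l with
  | _ n ih =>
    subst hn
    rcases l with _ | ⟨b, l⟩
    · exact ⟨[], [], rfl, rfl, by simp [hc.le]⟩
    rw [endHeight_cons] at he
    simp only [heights_cons, List.mem_cons, forall_eq_or_imp] at hl
    by_cases hb : c + stepVal b = t
    · obtain ⟨rfl, rfl⟩ : b = true ∧ t = c + 1 := by cases b <;> grind [stepVal]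
      obtain ⟨k, _, rfl, rfl | ⟨l, rfl⟩⟩ := exists_eq_prependPeaks hl.2 he.le
      · simp [endHeight_prependPeaks] at he
      simp only [stepVal_true, mem_heights_prependPeaks, endHeight_prependPeaks, heights_cons,
        endHeight_cons, stepVal_false, add_neg_cancel_right] at hl he
      obtain ⟨s, a, rfl, ha, hs⟩ := ih l.length (by grind [length_prependPeaks]) hc
        (fun x hx => hl.2 x (by simp [hx])) he rfl
      exact ⟨true :: false :: s, k :: a, insertPeaks_true_false_cons rfl k,
        by simp [peakHeights, ha], by simpa using hs⟩
    · have hc' : c + stepVal b < t := by cases b <;> grind [stepVal]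
      obtain ⟨s, a, rfl, ha, hs⟩ := ih l.length (by simp) hc' hl.2 he rfl
      have not_peak : ¬(b = true ∧ s.head? = some false ∧ c + 1 = t) := by
        rintro ⟨rfl, -, rfl⟩
        exact hb rfl
      refine ⟨b :: s, a, insertPeaks_cons not_peak, ?_, by simpa using ⟨hc.le, hs⟩⟩
      rw [count_peakHeights_cons, if_neg not_peak, add_zero, ha]

end InsertPeaks

section SupportCount

variable {ι : Type*} [DecidableEq ι]

theorem card_support_le_of_mem_finsuppAntidiag {s : Finset ι} {n : ℕ} {f : ι →₀ ℕ}
    (hf : f ∈ s.finsuppAntidiag n) : #f.support ≤ n := by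
  obtain ⟨rfl, hs⟩ := mem_finsuppAntidiag.mp hf
  calc #f.support = ∑ i ∈ f.support, 1 := by simp
    _ ≤ ∑ i ∈ f.support, f i := sum_le_sum fun i hi => by
      have := Finsupp.mem_support_iff.mp hi
      omega
    _ ≤ ∑ i ∈ s, f i := sum_le_sum_of_subset hs

theorem card_filter_support_eq_finsuppAntidiag {s T : Finset ι} (hT : T ⊆ s) (m : ℕ) :
    #{f ∈ s.finsuppAntidiag (m + #T) | f.support = T} = #(T.finsuppAntidiag m) := by
  let ind : ι →₀ ℕ := Finsupp.indicator T fun _ _ => 1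
  have ind_apply (i : ι) : ind i = if i ∈ T then 1 else 0 := by simp [ind, Finsupp.indicator_apply]
  have sum_add_ind (g : ι →₀ ℕ) : (g + ind).sum (fun _ x => x) = g.sum (fun _ x => x) + #T := by
    rw [Finsupp.sum_add_index' (fun _ => rfl) (fun _ _ _ => rfl)]
    congr 1
    rw [Finsupp.sum_of_support_subset _ (Finsupp.support_indicator_subset _ _) _ (by simp)]
    simp
  symm
  refine card_nbij (· + ind) ?_ (add_left_injective ind).injOn ?_
  · intro g hg
    obtain ⟨rfl, hgT⟩ := mem_finsuppAntidiag'.mp hg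
    have support_add : (g + ind).support = T := by
      ext i
      have := @hgT i
      simp only [Finsupp.mem_support_iff, Finsupp.add_apply, ind_apply] at this ⊢
      grind
    exact mem_filter.mpr ⟨mem_finsuppAntidiag'.mpr
      ⟨sum_add_ind g, support_add.trans_subset hT⟩, support_add⟩
  · intro f hf
    obtain ⟨hf, hsupp⟩ := mem_filter.mp (mem_coe.mp hf)
    have ind_le : ind ≤ f := fun i => by
      have := hsupp ▸ Finsupp.mem_support_iff (f := f) (a := i)
      grind
    have sub_add := tsub_add_cancel_of_le ind_le
    refine ⟨f - ind, mem_finsuppAntidiag'.mpr ⟨?_, ?_⟩, sub_add⟩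
    · have := (mem_finsuppAntidiag'.mp hf).1
      rwa [← sub_add, sum_add_ind, Nat.add_right_cancel_iff] at this
    · exact Finsupp.support_tsub.trans hsupp.subset

theorem card_filter_card_support_finsuppAntidiag (s : Finset ι) (n k : ℕ) :
    #{f ∈ s.finsuppAntidiag (n + 1) | #f.support = k + 1} =
      (#s).choose (k + 1) * n.choose k := by
  rcases lt_or_ge n k with hnk | hkn
  · rw [Nat.choose_eq_zero_of_lt hnk, mul_zero, card_eq_zero, filter_eq_empty_iff]
    intro f hf
    have := card_support_le_of_mem_finsuppAntidiag hf
    omega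
  obtain ⟨m, rfl⟩ := Nat.exists_eq_add_of_le' hkn
  have support_mem : ∀ f ∈ ({f ∈ s.finsuppAntidiag (m + k + 1) | #f.support = k + 1} : Finset _),
      f.support ∈ s.powersetCard (k + 1) := fun f hf => by
    simp only [mem_filter, mem_finsuppAntidiag] at hf
    exact mem_powersetCard.mpr ⟨hf.1.2, hf.2⟩
  rw [card_eq_sum_card_fiberwise support_mem, sum_const_nat (m := (m + k).choose k),
    card_powersetCard]
  intro T hT
  obtain ⟨hTs, hTcard⟩ := mem_powersetCard.mp hT
  rw [filter_filter, filter_congr (q := fun f => f.support = T) (by grind), add_assoc, ← hTcard,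
    card_filter_support_eq_finsuppAntidiag hTs, card_finsuppAntidiag_nat_eq_choose, hTcard,
    show k + 1 + m - 1 = m + k by omega, Nat.choose_symm_add]

theorem add_two_dvd_choose_mul_choose (q k : ℕ) :
    q + 2 ∣ (q + 1 + (k + 1)).choose (k + 1) * q.choose k := by
  have coprime : Nat.Coprime (q + 1 + 1) (q + 1) := by simp
  refine coprime.dvd_of_dvd_mul_left
    ⟨(q + 1 + (k + 1)).choose (q + 2) * (q + 1).choose (k + 1), ?_⟩
  have lower := Nat.add_one_mul_choose_eq q k
  have upper := Nat.choose_succ_right_eq (q + 1 + (k + 1)) (q + 1)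
  rw [Nat.choose_symm_add, Nat.add_sub_cancel_left] at upper
  linear_combination (q + 1 + (k + 1)).choose (k + 1) * lower - (q + 1).choose (k + 1) * upper

theorem add_one_dvd_card_filter_card_support_finsuppAntidiag (s : Finset ι) (r : ℕ) :
    r + 1 ∣ #{f ∈ s.finsuppAntidiag r | #f.support + r = #s} := by
  rcases r with _ | q
  · simp
  rcases le_or_gt #s (q + 1) with hs | hs
  · rw [filter_eq_empty_iff.mpr, card_empty]
    · exact dvd_zero _
    intro f hf hcard
    obtain rfl : f = 0 := by
      rw [← Finsupp.support_eq_empty, ← card_eq_zero]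
      omega
    simp at hf
  obtain ⟨k, hk⟩ : ∃ k, #s = q + 1 + (k + 1) := ⟨#s - (q + 2), by omega⟩
  rw [filter_congr (q := fun f => #f.support = k + 1) (by omega),
    card_filter_card_support_finsuppAntidiag, hk]
  exact add_two_dvd_choose_mul_choose q k

end SupportCount

theorem dvd_ncard_of_forall_dvd_ncard_fiber {α β : Type*} {S : Set α} (hS : S.Finite) (f : α → β)
    {d : ℕ} (hd : ∀ b, d ∣ {x ∈ S | f x = b}.ncard) : d ∣ S.ncard := by
  classical
  lift S to Finset α using hS
  rw [Set.ncard_coe_finset, card_eq_sum_card_image f S]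
  refine dvd_sum fun b _ => ?_
  simpa only [mem_coe, ← coe_filter, Set.ncard_coe_finset] using hd b

theorem count_ofFn {α : Type*} [DecidableEq α] {N : ℕ} (f : Fin N → α) (x : α) :
    (List.ofFn f).count x = #{i | f i = x} := by
  rw [← Multiset.coe_count, ← Fin.univ_val_map, Multiset.count_map]
  simp only [eq_comm, card_def, filter_val]

theorem count_zero_ofFn_add_card_support {N : ℕ} (f : Fin N →₀ ℕ) :
    (List.ofFn f).count 0 + #f.support = N := by
  have support_eq : f.support = ({i | ¬f i = 0} : Finset (Fin N)) := by
    ext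
    simp
  rw [count_ofFn, support_eq, card_filter_add_card_filter_not, card_univ, Fintype.card_fin]

theorem add_one_dvd_ncard_sum_eq_count_zero_eq (r N : ℕ) :
    r + 1 ∣ {a : List ℕ | a.length = N ∧ a.sum = r ∧ a.count 0 = r}.ncard := by
  have ofFn_injective : Function.Injective fun f : Fin N →₀ ℕ => List.ofFn f :=
    List.ofFn_injective.comp DFunLike.coe_injective
  convert add_one_dvd_card_filter_card_support_finsuppAntidiag (univ : Finset (Fin N)) r
  rw [← Set.ncard_coe_finset, ← Set.ncard_image_of_injective _ ofFn_injective]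
  congr 1
  ext a
  simp only [Set.mem_image, coe_filter, mem_finsuppAntidiag, card_univ, Fintype.card_fin]
  constructor
  · rintro ⟨rfl, hsum, hzero⟩
    let f : Fin a.length →₀ ℕ := Finsupp.equivFunOnFinite.symm a.get
    have ofFn_f : List.ofFn f = a := List.ofFn_get a
    have := count_zero_ofFn_add_card_support f
    refine ⟨f, ⟨⟨?_, subset_univ _⟩, ?_⟩, ofFn_f⟩
    · rw [← List.sum_ofFn, ofFn_f, hsum]
    · rw [ofFn_f] at this
      omega
  · rintro ⟨f, ⟨⟨hsum, -⟩, hsupp⟩, rfl⟩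
    have := count_zero_ofFn_add_card_support f
    exact ⟨List.length_ofFn, List.sum_ofFn.trans hsum, by omega⟩

section UniformlyPeaked

/-- The largest altitude visited by the path that starts at altitude `c` and follows the steps
of `l`. -/
def maxHeight (c : ℤ) (l : List Bool) : ℤ := (heights c l).max (heights_ne_nil c l)

/-- The Dyck words of semi-length `n` with exactly `r` peaks at each height from `1` up to the
height of the path. -/
structure IsUniformlyPeaked (r n : ℕ) (l : List Bool) : Prop where
  length_eq : l.length = 2 * n
  endHeight_eq : endHeight 0 l = 0
  heights_nonneg : ∀ x ∈ heights 0 l, 0 ≤ x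
  count_peakHeights : ∀ h, 1 ≤ h → h ≤ maxHeight 0 l → (peakHeights 0 l).count h = r

variable {c t h : ℤ} {l s : List Bool} {a a' : List ℕ} {r n : ℕ}

theorem le_maxHeight_iff : h ≤ maxHeight c l ↔ ∃ x ∈ heights c l, h ≤ x :=
  ⟨fun hh => ⟨_, List.max_mem _, hh⟩, fun ⟨_, hx, hh⟩ => hh.trans (List.le_max_of_mem hx)⟩

theorem maxHeight_le_iff : maxHeight c l ≤ h ↔ ∀ x ∈ heights c l, x ≤ h :=
  List.max_le_iff _

theorem maxHeight_insertPeaks_congr (ha : a.length = (peakHeights c s).count t)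
    (ha' : a'.length = (peakHeights c s).count t) (hsum : a.sum = a'.sum) :
    maxHeight c (insertPeaks t c s a) = maxHeight c (insertPeaks t c s a') :=
  eq_of_forall_le_iff fun h => by
    simp only [le_maxHeight_iff, mem_heights_insertPeaks ha, mem_heights_insertPeaks ha', hsum]

theorem IsUniformlyPeaked.insertPeaks_congr (h : IsUniformlyPeaked r n (insertPeaks t 0 s a'))
    (ha : a.length = (peakHeights 0 s).count t) (ha' : a'.length = (peakHeights 0 s).count t)
    (hsum : a.sum = a'.sum) (hzero : a.count 0 = a'.count 0) :
    IsUniformlyPeaked r n (insertPeaks t 0 s a) where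
  length_eq := by rw [← h.length_eq, length_insertPeaks ha, length_insertPeaks ha', hsum]
  endHeight_eq := endHeight_insertPeaks.trans (endHeight_insertPeaks.symm.trans h.endHeight_eq)
  heights_nonneg x hx := h.heights_nonneg x <| by
    rwa [mem_heights_insertPeaks ha', ← hsum, ← mem_heights_insertPeaks ha]
  count_peakHeights x hx hx' := by
    rw [maxHeight_insertPeaks_congr ha ha' hsum] at hx'
    rw [← h.count_peakHeights x hx hx', count_peakHeights_insertPeaks ha,
      count_peakHeights_insertPeaks ha', hsum, hzero]

theorem IsUniformlyPeaked.one_lt_maxHeight (h : IsUniformlyPeaked r n l) (hn : r < n) :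
    1 < maxHeight 0 l := by
  by_contra! hmax
  obtain ⟨k, l, rfl, rfl | ⟨l, rfl⟩⟩ :=
    exists_eq_prependPeaks (maxHeight_le_iff.mp hmax) h.endHeight_eq.le
  · have length_eq := h.length_eq
    rw [length_prependPeaks, List.length_nil] at length_eq
    have one_le : 1 ≤ maxHeight 0 (prependPeaks k []) :=
      le_maxHeight_iff.mpr ⟨1, (mem_heights_prependPeaks ..).mpr (.inr ⟨rfl, by omega⟩), le_rfl⟩
    have count_one := h.count_peakHeights 1 le_rfl one_le
    rw [peakHeights_prependPeaks, peakHeights, List.append_nil, zero_add,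
      List.count_replicate_self] at count_one
    omega
  · have := h.heights_nonneg (-1) ((mem_heights_prependPeaks ..).mpr (by simp))
    omega

theorem IsUniformlyPeaked.exists_insertPeaks_erasePeaks_eq (h : IsUniformlyPeaked r n l)
    (ht : 1 ≤ t) (hmax : maxHeight 0 l = t + 1) :
    ∃ a, a.length = (peakHeights 0 (erasePeaks (t + 1) 0 l)).count t ∧ a.sum = r ∧ a.count 0 = r ∧
      insertPeaks t 0 (erasePeaks (t + 1) 0 l) a = l ∧
      t + 1 ∉ peakHeights 0 (erasePeaks (t + 1) 0 l) := by
  obtain ⟨s, a, rfl, ha, hs⟩ := exists_insertPeaks_eq (t := t) (by omega)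
    (maxHeight_le_iff.mp hmax.le) (by rw [h.endHeight_eq]; omega)
  have no_top_peak : t + 1 ∉ peakHeights 0 s := fun hmem => by
    have := hs _ (mem_heights_of_mem_peakHeights hmem)
    omega
  have count_top := h.count_peakHeights (t + 1) (by omega) hmax.ge
  have count_below := h.count_peakHeights t ht (by omega)
  rw [count_peakHeights_insertPeaks ha, if_neg (by omega), List.count_eq_zero.mpr no_top_peak,
    if_pos rfl, zero_add] at count_top
  rw [count_peakHeights_insertPeaks ha, if_pos rfl] at count_below
  rw [erasePeaks_insertPeaks ha no_top_peak]
  exact ⟨a, ha, count_top, count_below, rfl, no_top_peak⟩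

theorem IsUniformlyPeaked.fiber_eq_image (h : IsUniformlyPeaked r n l) (ht : 1 ≤ t)
    (hmax : maxHeight 0 l = t + 1) (hs : erasePeaks (t + 1) 0 l = s) :
    {l' | IsUniformlyPeaked r n l' ∧ maxHeight 0 l' = t + 1 ∧ erasePeaks (t + 1) 0 l' = s} =
      insertPeaks t 0 s '' {a | a.length = (peakHeights 0 s).count t ∧ a.sum = r ∧
        a.count 0 = r} := by
  ext l'
  constructor
  · rintro ⟨h', hmax', rfl⟩
    obtain ⟨a, ha, hsum, hzero, hins, -⟩ := h'.exists_insertPeaks_erasePeaks_eq ht hmax'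
    exact ⟨a, ⟨ha, hsum, hzero⟩, hins⟩
  · rintro ⟨a, ⟨ha, hsum, hzero⟩, rfl⟩
    obtain ⟨a', ha', hsum', hzero', hins, no_top_peak⟩ := h.exists_insertPeaks_erasePeaks_eq ht hmax
    subst hs
    refine ⟨?_, ?_, erasePeaks_insertPeaks ha no_top_peak⟩
    · exact (hins ▸ h).insertPeaks_congr ha ha' (hsum.trans hsum'.symm) (hzero.trans hzero'.symm)
    · rw [maxHeight_insertPeaks_congr ha ha' (hsum.trans hsum'.symm), hins, hmax]

theorem add_one_dvd_ncard_isUniformlyPeaked (hn : r < n) :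
    r + 1 ∣ {l | IsUniformlyPeaked r n l}.ncard := by
  have finite : {l | IsUniformlyPeaked r n l}.Finite :=
    (List.finite_length_eq Bool (2 * n)).subset fun _ h => h.length_eq
  refine dvd_ncard_of_forall_dvd_ncard_fiber finite
    (fun l => (maxHeight 0 l, erasePeaks (maxHeight 0 l) 0 l)) fun ⟨H, s⟩ => ?_
  have fiber_eq : {l ∈ {l | IsUniformlyPeaked r n l} |
      (maxHeight 0 l, erasePeaks (maxHeight 0 l) 0 l) = (H, s)} =
      {l | IsUniformlyPeaked r n l ∧ maxHeight 0 l = H ∧ erasePeaks H 0 l = s} := by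
    ext l
    simp only [Set.mem_ofPred_eq, Prod.mk.injEq]
    grind
  rw [fiber_eq]
  rcases Set.eq_empty_or_nonempty
    {l | IsUniformlyPeaked r n l ∧ maxHeight 0 l = H ∧ erasePeaks H 0 l = s}
    with hempty | ⟨l, hl, hmax, hs⟩
  · rw [hempty, Set.ncard_empty]
    exact dvd_zero _
  obtain ⟨t, rfl⟩ : ∃ t, H = t + 1 := ⟨H - 1, by omega⟩
  have ht : 1 ≤ t := by
    have := hl.one_lt_maxHeight hn
    omega
  rw [hl.fiber_eq_image ht hmax hs, Set.InjOn.ncard_image]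
  · exact add_one_dvd_ncard_sum_eq_count_zero_eq r _
  · exact fun a ha a' ha' => insertPeaks_injective ha.1 ha'.1

end UniformlyPeaked

section Words

variable {L : ℕ} (w : Fin L → Bool)

theorem psum_zero : psum w 0 = 0 := by simp [psum]

theorem psum_succ (w : Fin (L + 1) → Bool) (i : ℕ) :
    psum w (i + 1) = stepVal (w 0) + psum (Fin.tail w) i := by
  simp [psum, Fin.sum_univ_succ, Fin.tail]

theorem psum_of_le {i : ℕ} (hi : L ≤ i) : psum w i = psum w L :=
  sum_congr rfl fun j _ => by rw [if_pos (j.2.trans_le hi), if_pos j.2]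

theorem endHeight_take_ofFn (c : ℤ) (i : ℕ) :
    endHeight c ((List.ofFn w).take i) = c + psum w i := by
  induction L generalizing c i with
  | zero => simp [psum]
  | succ L ih =>
    cases i with
    | zero => simp [psum_zero]
    | succ i =>
      rw [List.ofFn_succ, List.take_succ_cons, endHeight_cons, ih, psum_succ, add_assoc]
      rfl

theorem endHeight_ofFn : endHeight 0 (List.ofFn w) = psum w L := by
  rw [← zero_add (psum w L), ← endHeight_take_ofFn, List.take_of_length_le (by simp)]

theorem mem_heights_ofFn_iff {x : ℤ} :
    x ∈ heights 0 (List.ofFn w) ↔ ∃ i ≤ L, psum w i = x := by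
  simp [mem_heights_iff_exists_take, endHeight_take_ofFn]

theorem le_maxHeight_ofFn_iff {h : ℤ} :
    h ≤ maxHeight 0 (List.ofFn w) ↔ ∃ i ≤ L, h ≤ psum w i := by
  simp [le_maxHeight_iff, mem_heights_ofFn_iff]

theorem forall_heights_ofFn_nonneg_iff :
    (∀ x ∈ heights 0 (List.ofFn w), 0 ≤ x) ↔ ∀ i, 0 ≤ psum w i := by
  simp only [mem_heights_ofFn_iff, forall_exists_index, and_imp, forall_apply_eq_imp_iff₂]
  refine ⟨fun h i => ?_, fun h i _ => h i⟩
  rcases le_total i L with hi | hi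
  · exact h i hi
  · exact psum_of_le w hi ▸ h L le_rfl

theorem isPeak_iff {i : ℕ} : IsPeak w i ↔
    (List.ofFn w)[i]? = some true ∧ (List.ofFn w)[i + 1]? = some false := by
  simp only [IsPeak, List.getElem?_eq_some_iff, List.getElem_ofFn, List.length_ofFn]
  constructor
  · rintro ⟨⟨_, hj⟩, ⟨_, hk⟩, rfl, rfl, h, h'⟩
    exact ⟨⟨hj, h⟩, hk, h'⟩
  · rintro ⟨⟨hj, h⟩, hk, h'⟩
    exact ⟨⟨i, hj⟩, ⟨i + 1, hk⟩, rfl, rfl, h, h'⟩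

theorem card_isPeak_peakHeight_eq (h : ℤ) :
    Nat.card {i : ℕ // IsPeak w i ∧ peakHeight w i = h} =
      (peakHeights 0 (List.ofFn w)).count h := by
  rw [count_peakHeights_eq_card]
  refine Nat.subtype_card _ fun i => ?_
  simp only [mem_filter, mem_range, endHeight_take_ofFn, isPeak_iff, peakHeight, zero_add,
    and_assoc, and_iff_right_iff_imp]
  exact fun hi => (List.getElem?_eq_some_iff.mp hi.1).1

theorem isUniformlyPeaked_ofFn_iff {r n : ℕ} (w : Fin (2 * n) → Bool) :
    IsUniformlyPeaked r n (List.ofFn w) ↔ IsDyck w ∧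
      ∀ h : ℕ, 1 ≤ h → (∃ i : ℕ, i ≤ 2 * n ∧ (h : ℤ) ≤ psum w i) →
        Nat.card {i : ℕ // IsPeak w i ∧ peakHeight w i = (h : ℤ)} = r := by
  simp only [← le_maxHeight_ofFn_iff, card_isPeak_peakHeight_eq, IsDyck, IsBridge,
    ← forall_heights_ofFn_nonneg_iff, ← endHeight_ofFn]
  constructor
  · exact fun h => ⟨⟨h.endHeight_eq, h.heights_nonneg⟩,
      fun k hk => h.count_peakHeights k (by omega)⟩
  · rintro ⟨⟨hend, hnonneg⟩, hpeaks⟩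
    refine ⟨List.length_ofFn, hend, hnonneg, fun h hh => ?_⟩
    obtain ⟨k, rfl⟩ := Int.eq_ofNat_of_zero_le (zero_le_one.trans hh)
    exact hpeaks k (by omega)

end Words

/-- For all integers `r ≥ 1` and `n > r`, the number `D_r(n)` of
Dyck paths of semi-length `n` that have exactly `r` peaks of height `h` for
every height `h` with `1 ≤ h ≤` (maximum height of the path) is divisible by
`r + 1`.  The condition "`h` is at most the maximum height" is expressed as
"some partial sum reaches `h`". -/
theorem stmt_14 (r n : ℕ) (hr : 1 ≤ r) (hn : r < n) :
    (r + 1) ∣ Nat.card {w : Fin (2 * n) → Bool // IsDyck w ∧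
        ∀ h : ℕ, 1 ≤ h → (∃ i : ℕ, i ≤ 2 * n ∧ (h : ℤ) ≤ psum w i) →
          Nat.card {i : ℕ // IsPeak w i ∧ peakHeight w i = (h : ℤ)} = r} := by
  have image_ofFn : List.ofFn '' {w : Fin (2 * n) → Bool | IsUniformlyPeaked r n (List.ofFn w)} =
      {l | IsUniformlyPeaked r n l} :=
    Set.image_preimage_eq_of_subset fun l hl => by
      rw [← hl.length_eq]
      exact ⟨l.get, List.ofFn_get l⟩
  have card_eq : Nat.card {w : Fin (2 * n) → Bool // IsUniformlyPeaked r n (List.ofFn w)} =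
      {l | IsUniformlyPeaked r n l}.ncard := by
    rw [← image_ofFn, Set.ncard_image_of_injective _ List.ofFn_injective]
    exact Nat.card_coe_set_eq _
  simp only [← isUniformlyPeaked_ofFn_iff, card_eq]
  exact add_one_dvd_ncard_isUniformlyPeaked hn
end

section
/- Let S be a finite set of integers, let s ∈ S, and let n ≥ 1. Let b_n(s) be the total number of occurrences of the step s in all bridges of length n over S, i.e., the number of pairs (w, i) where w = (w_1,…,w_n) ∈ S^n satisfies w_1+⋯+w_n = 0 and w_i = s. Then n divides b_n(s). -/
/-!
The symmetric group permutes the positions of a word, preserving both its set of letters and its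
sum, so it acts on the pairs (bridge, marked occurrence of `s`). The map sending such a pair to
the marked position is equivariant and the action on positions is transitive, so all its fibres
have the same cardinality: `s` occurs equally often at each of the `n` positions.
-/

open MulAction

section Equivariant

variable {G E B : Type*} [Group G] [MulAction G E] [MulAction G B] [IsPretransitive G B]

theorem card_eq_card_fiber_mul_card (f : E →[G] B) (b₀ : B) :
    Nat.card E = Nat.card {x // f x = b₀} * Nat.card B := by
  have fiber_equiv (b : B) : Nonempty ({x // f x = b} ≃ {x // f x = b₀}) := by
    obtain ⟨g, rfl⟩ := exists_smul_eq G b b₀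
    exact ⟨(toPerm g).subtypeEquiv fun x => by
      rw [toPerm_apply, map_smul, smul_left_cancel_iff]⟩
  calc Nat.card E = Nat.card (Σ b, {x // f x = b}) := Nat.card_congr (Equiv.sigmaFiberEquiv f).symm
    _ = Nat.card (B × {x // f x = b₀}) :=
      Nat.card_congr (Equiv.sigmaEquivProdOfEquiv fun b => (fiber_equiv b).some)
    _ = Nat.card {x // f x = b₀} * Nat.card B := by rw [Nat.card_prod, mul_comm]

theorem card_dvd_card_of_mulActionHom (f : E →[G] B) : Nat.card B ∣ Nat.card E := by
  rcases isEmpty_or_nonempty E with _ | ⟨⟨x⟩⟩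
  · simp
  · exact Dvd.intro_left _ (card_eq_card_fiber_mul_card f (f x)).symm

end Equivariant

section Words

attribute [local instance] arrowAction

variable {G ι α : Type*} [Group G] [MulAction G ι]

/-- The pairs `(w, i)` of a word `w ∈ W` and a position `i` at which the letter `a` occurs in `w`.
The group acts on positions and on words simultaneously, where `(g • w) i = w (g⁻¹ • i)`. -/
def occurrences (W : SubMulAction G (ι → α)) (a : α) : SubMulAction G ((ι → α) × ι) where
  carrier := {p | p.1 ∈ W ∧ p.1 p.2 = a}
  smul_mem' g p hp := by
    refine ⟨W.smul_mem g hp.1, ?_⟩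
    change p.1 (g⁻¹ • g • p.2) = a
    rw [inv_smul_smul, hp.2]

theorem card_dvd_card_occurrences [IsPretransitive G ι] (W : SubMulAction G (ι → α)) (a : α) :
    Nat.card ι ∣ Nat.card (occurrences W a) :=
  let position : occurrences W a →[G] ι := { toFun p := p.1.2, map_smul' _ _ := rfl }
  card_dvd_card_of_mulActionHom position

/-- The words over `S` indexed by `ι` with sum `t`, with the action of permutations of positions.
Bridges of length `n` are the case `ι = Fin n`, `t = 0`. -/
def wordsWithSum {M : Type*} [AddCommMonoid M] (ι : Type*) [Fintype ι] (S : Set M) (t : M) :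
    SubMulAction (Equiv.Perm ι) (ι → M) where
  carrier := {w | (∀ i, w i ∈ S) ∧ ∑ i, w i = t}
  smul_mem' σ w hw := ⟨fun i => hw.1 (σ⁻¹ i), (Equiv.sum_comp σ⁻¹ w).trans hw.2⟩

theorem stmt_15_general {M : Type*} [AddCommMonoid M] (ι : Type*) [Fintype ι]
    (S : Set M) (s t : M) :
    Nat.card ι ∣ Nat.card {p : (ι → M) × ι //
      (∀ i, p.1 i ∈ S) ∧ ∑ i, p.1 i = t ∧ p.1 p.2 = s} := by
  rw [Nat.card_congr (Equiv.subtypeEquivRight fun _ => and_assoc.symm)]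
  exact card_dvd_card_occurrences (wordsWithSum ι S t) s

end Words

/-- Let `S` be a finite set of integers, `s ∈ S`, and `n ≥ 1`.
Let `b_n(s)` be the total number of occurrences of the step `s` in all bridges
of length `n` over `S`, i.e. the number of pairs `(w, i)` with `w ∈ S^n`,
`w_1 + ⋯ + w_n = 0` and `w_i = s`.  Then `n` divides `b_n(s)`. -/
theorem stmt_15 (S : Finset ℤ) (s : ℤ) (hs : s ∈ S) (n : ℕ) (hn : 1 ≤ n) :
    n ∣ Nat.card {p : (Fin n → ℤ) × Fin n //
      (∀ i, p.1 i ∈ S) ∧ (∑ i, p.1 i) = 0 ∧ p.1 p.2 = s} := by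
  simpa only [Nat.card_fin, Finset.mem_coe] using stmt_15_general (Fin n) (S : Set ℤ) s 0
end

section
/- For every integer n ≥ 1, the sum over all compositions of n of the product of the parts equals the Fibonacci number F_{2n}. (Equivalently, the number of decorated compositions of n, i.e., compositions in which each part of size k carries one of k possible labels, is F_{2n}.) -/
/-!
Splitting off the first part of a composition gives `S (n + 1) = ∑ j ≤ n, (n + 1 - j) * S j` for
the sum `S n` of the products of parts, with `S 0 = 1`. The right-hand side is an iterated partial
sum: writing `A m = ∑ j ≤ m, S j`, it equals `∑ m ≤ n, A m`. Hence `A (m + 1) - A m = ∑ k ≤ m, A k`,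
which is the recursion of the odd-indexed Fibonacci numbers, because `∑ k ≤ m, F (2k + 1)`
telescopes to `F (2m + 2)`. So `A m = F (2m + 1)`, and one more summation gives `S`.
-/

open Finset

theorem sum_range_fib_two_mul_add_one (n : ℕ) :
    ∑ k ∈ range n, Nat.fib (2 * k + 1) = Nat.fib (2 * n) := by
  induction n with
  | zero => rfl
  | succ n ih => rw [sum_range_succ, ih, Nat.mul_succ, Nat.fib_add_two]

theorem sum_range_sum_range_succ {M : Type*} [AddCommMonoid M] (a : ℕ → M) (n : ℕ) :
    ∑ m ∈ range n, ∑ j ∈ range (m + 1), a j = ∑ j ∈ range n, (n - j) • a j := by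
  simp only [range_eq_Ico, ← sum_Ico_Ico_comm, sum_const, Nat.card_Ico]

theorem composition_blocks_ne_nil {n : ℕ} (c : Composition (n + 1)) : c.blocks ≠ [] :=
  c.blocks_eq_nil.not.2 n.succ_ne_zero

theorem composition_head_add_sum_tail {n : ℕ} (c : Composition (n + 1)) :
    c.blocks.head (composition_blocks_ne_nil c) + c.blocks.tail.sum = n + 1 := by
  rw [← List.sum_cons, List.cons_head_tail, c.blocks_sum]

theorem composition_sum_tail_lt {n : ℕ} (c : Composition (n + 1)) :
    c.blocks.tail.sum < n + 1 :=
  (Nat.lt_add_of_pos_left (c.blocks_pos (List.head_mem _))).trans_eq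
    (composition_head_add_sum_tail c)

theorem composition_blocks_eq_cons_tail {n : ℕ} (c : Composition (n + 1)) :
    c.blocks = (n + 1 - c.blocks.tail.sum) :: c.blocks.tail := by
  rw [← Nat.eq_sub_of_add_eq (composition_head_add_sum_tail c), List.cons_head_tail]

/-- Splitting off the first part: a composition of `n + 1` amounts to a composition of some
`j ≤ n`, to which the part `n + 1 - j` is prepended. -/
def compositionSuccEquiv (n : ℕ) : Composition (n + 1) ≃ Σ j : Fin (n + 1), Composition j where
  toFun c :=
    ⟨⟨c.blocks.tail.sum, composition_sum_tail_lt c⟩,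
      { blocks := c.blocks.tail
        blocks_pos := fun hi ↦ c.blocks_pos (List.mem_of_mem_tail hi)
        blocks_sum := rfl }⟩
  invFun p :=
    { blocks := (n + 1 - p.1) :: p.2.blocks
      blocks_pos := by
        rintro i (_ | ⟨_, hi⟩)
        · exact Nat.sub_pos_of_lt p.1.isLt
        · exact p.2.blocks_pos hi
      blocks_sum := by
        rw [List.sum_cons, p.2.blocks_sum, Nat.sub_add_cancel p.1.isLt.le] }
  left_inv c := Composition.ext (composition_blocks_eq_cons_tail c).symm
  right_inv := by
    rintro ⟨⟨j, _⟩, ⟨l, _, h_sum⟩⟩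
    obtain rfl : l.sum = j := h_sum
    rfl

section WeightedSum

variable {R : Type*} [Semiring R]

/-- The sum over all compositions of `n` of the product of the weights `w k` of the parts `k`. When
`w k` is the number of labels available to a part `k`, it counts decorated compositions. -/
def weightedCompositionSum (w : ℕ → R) (n : ℕ) : R :=
  ∑ c : Composition n, (c.blocks.map w).prod

theorem weightedCompositionSum_zero (w : ℕ → R) : weightedCompositionSum w 0 = 1 := by
  have h_blocks (c : Composition 0) : c.blocks = [] := c.blocks_eq_nil.2 rfl
  simp [weightedCompositionSum, h_blocks, composition_card]

theorem weightedCompositionSum_succ (w : ℕ → R) (n : ℕ) :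
    weightedCompositionSum w (n + 1) =
      ∑ j ∈ range (n + 1), w (n + 1 - j) * weightedCompositionSum w j := by
  calc weightedCompositionSum w (n + 1)
      = ∑ p : Σ j : Fin (n + 1), Composition j,
          (((compositionSuccEquiv n).symm p).blocks.map w).prod :=
        ((compositionSuccEquiv n).symm.sum_comp _).symm
    _ = ∑ j : Fin (n + 1), ∑ c : Composition j, w (n + 1 - j) * (c.blocks.map w).prod := by
        simp only [Fintype.sum_sigma, compositionSuccEquiv, Equiv.coe_fn_symm_mk, List.map_cons,
          List.prod_cons]
    _ = ∑ j ∈ range (n + 1), w (n + 1 - j) * weightedCompositionSum w j := by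
        simp only [← mul_sum, ← Fin.sum_univ_eq_sum_range, weightedCompositionSum]

end WeightedSum

theorem weightedCompositionSum_id_succ (n : ℕ) :
    weightedCompositionSum id (n + 1) =
      ∑ m ∈ range (n + 1), ∑ j ∈ range (m + 1), weightedCompositionSum id j := by
  simp only [weightedCompositionSum_succ, sum_range_sum_range_succ, id, smul_eq_mul]

theorem sum_range_weightedCompositionSum_id (m : ℕ) :
    ∑ j ∈ range (m + 1), weightedCompositionSum id j = Nat.fib (2 * m + 1) := by
  induction m using Nat.strong_induction_on with
  | _ m ih =>
    cases m with
    | zero => simp [weightedCompositionSum_zero]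
    | succ m =>
      have h_last : weightedCompositionSum id (m + 1) = Nat.fib (2 * (m + 1)) := by
        rw [weightedCompositionSum_id_succ, ← sum_range_fib_two_mul_add_one]
        exact sum_congr rfl fun k hk ↦ ih k (mem_range.1 hk)
      rw [sum_range_succ, ih m m.lt_succ_self, h_last]
      exact Nat.fib_add_two.symm

/-- For every integer `n ≥ 1`, the sum over all compositions of
`n` of the product of the parts equals the Fibonacci number `F_{2n}`.
(Equivalently, the number of decorated compositions of `n` is `F_{2n}`.) -/
theorem stmt_17 (n : ℕ) (hn : 1 ≤ n) :
    ∑ c : Composition n, c.blocks.prod = Nat.fib (2 * n) := by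
  obtain ⟨m, rfl⟩ := Nat.exists_eq_add_of_le' hn
  calc ∑ c : Composition (m + 1), c.blocks.prod
      = weightedCompositionSum id (m + 1) := by simp only [weightedCompositionSum, List.map_id]
    _ = ∑ k ∈ range (m + 1), ∑ j ∈ range (k + 1), weightedCompositionSum id j :=
        weightedCompositionSum_id_succ m
    _ = ∑ k ∈ range (m + 1), Nat.fib (2 * k + 1) :=
        sum_congr rfl fun k _ ↦ sum_range_weightedCompositionSum_id k
    _ = Nat.fib (2 * (m + 1)) := sum_range_fib_two_mul_add_one (m + 1)
end

section
/- For every integer n ≥ 1, let C_o(n) be the number of compositions of n whose first part is odd and C_e(n) be the number of compositions of n whose first part is even. Then C_o(n) − C_e(n) = (2^(n−1) + 2·(−1)^(n−1))/3, which is the number of closed walks of length n−1 starting and ending at a fixed vertex of the complete graph on 3 vertices. -/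
/-!
Adding one to the first part turns the compositions of `n` with odd first part into those of `n + 1`
with even first part, so `C_e(n + 1) = C_o(n)`. As there are `2 ^ n` compositions of `n + 1`, the
difference `D = C_o - C_e` satisfies `D(n + 2) + D(n + 1) = 2 ^ n`, and `D(1) = 1`.
The adjacency matrix of a complete graph on `q` vertices is `J - 1`, where `J` is the all-ones
matrix; since `J ^ 2 = q J`, its powers lie in the span of `J` and `1`, and their entries count
walks.
-/

section Compositions

variable {n : ℕ} {p : ℕ → Prop}

/-- The composition `c` has a first part, and it satisfies `p`. The empty composition of `0` has no
first part, so this is false for it. -/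
abbrev HasFirstPart (p : ℕ → Prop) (c : Composition n) : Prop :=
  ∃ a, c.blocks.head? = some a ∧ p a

theorem exists_blocks_eq_cons (c : Composition (n + 1)) : ∃ a l, c.blocks = a :: l :=
  List.exists_cons_of_ne_nil (by simp)

theorem hasFirstPart_iff_of_blocks_eq_cons {c : Composition n} {a : ℕ} {l : List ℕ}
    (h : c.blocks = a :: l) : HasFirstPart p c ↔ p a := by
  simp [HasFirstPart, h]

theorem hasFirstPart_not_iff {c : Composition (n + 1)} :
    HasFirstPart (fun a ↦ ¬ p a) c ↔ ¬ HasFirstPart p c := by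
  obtain ⟨a, l, h⟩ := exists_blocks_eq_cons c
  simp only [hasFirstPart_iff_of_blocks_eq_cons h]

theorem card_hasFirstPart_add_card_hasFirstPart_not (n : ℕ) (p : ℕ → Prop) :
    Nat.card {c : Composition (n + 1) // HasFirstPart p c} +
      Nat.card {c : Composition (n + 1) // HasFirstPart (fun a ↦ ¬ p a) c} = 2 ^ n := by
  classical
  calc
    _ = Nat.card (Composition (n + 1)) := by
      simp only [hasFirstPart_not_iff, ← Nat.card_sum, Nat.card_congr (Equiv.sumCompl _)]
    _ = 2 ^ n := by simp [composition_card]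

/-- The composition obtained from `c` by adding one to its first part. It is defined only for
compositions of positive integers, which do have a first part. -/
def incrementFirstPart (c : Composition (n + 1)) : Composition (n + 2) where
  blocks := c.blocks.modifyHead (· + 1)
  blocks_pos := by
    obtain ⟨a, l, h⟩ := exists_blocks_eq_cons c
    have hpos := @c.blocks_pos
    simp only [h, List.mem_cons, forall_eq_or_imp] at hpos
    simpa [h] using hpos.2
  blocks_sum := by
    obtain ⟨a, l, h⟩ := exists_blocks_eq_cons c
    have hsum := c.blocks_sum
    simp only [h, List.modifyHead_cons, List.sum_cons] at hsum ⊢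
    lia

theorem hasFirstPart_incrementFirstPart_iff {c : Composition (n + 1)} :
    HasFirstPart p (incrementFirstPart c) ↔ HasFirstPart (fun a ↦ p (a + 1)) c := by
  obtain ⟨a, l, h⟩ := exists_blocks_eq_cons c
  simp [HasFirstPart, incrementFirstPart, h]

theorem incrementFirstPart_injective :
    Function.Injective (incrementFirstPart : Composition (n + 1) → Composition (n + 2)) := by
  intro c d hcd
  obtain ⟨a, l, hc⟩ := exists_blocks_eq_cons c
  obtain ⟨b, m, hd⟩ := exists_blocks_eq_cons d
  ext1
  simpa [incrementFirstPart, Composition.ext_iff, hc, hd] using hcd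

theorem exists_incrementFirstPart_eq {c : Composition (n + 2)} (h : HasFirstPart (1 < ·) c) :
    ∃ d, incrementFirstPart d = c := by
  obtain ⟨a, l, hc⟩ := exists_blocks_eq_cons c
  have one_lt : 1 < a := (hasFirstPart_iff_of_blocks_eq_cons hc).1 h
  have hpos := @c.blocks_pos
  have hsum := c.blocks_sum
  simp only [hc, List.mem_cons, List.sum_cons, forall_eq_or_imp] at hpos hsum
  refine ⟨⟨(a - 1) :: l, by grind, by grind⟩, ?_⟩
  ext1
  simp [incrementFirstPart, hc, Nat.sub_add_cancel one_lt.le]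

theorem card_hasFirstPart_succ (n : ℕ) (hp : ¬ p 1) :
    Nat.card {c : Composition (n + 2) // HasFirstPart p c} =
      Nat.card {c : Composition (n + 1) // HasFirstPart (fun a ↦ p (a + 1)) c} := by
  symm
  refine Nat.card_eq_of_bijective (Subtype.map incrementFirstPart
    fun _ ↦ hasFirstPart_incrementFirstPart_iff.2)
    ⟨Subtype.map_injective _ incrementFirstPart_injective, fun ⟨c, hc⟩ ↦ ?_⟩
  have one_lt_first : HasFirstPart (1 < ·) c := by
    obtain ⟨a, ha, hpa⟩ := hc
    have : 0 < a := c.blocks_pos (List.mem_of_head? ha)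
    exact ⟨a, ha, by grind⟩
  obtain ⟨d, rfl⟩ := exists_incrementFirstPart_eq one_lt_first
  exact ⟨⟨d, hasFirstPart_incrementFirstPart_iff.1 hc⟩, rfl⟩

theorem card_hasFirstPart_even_one : Nat.card {c : Composition 1 // HasFirstPart Even c} = 0 := by
  rw [Nat.card_eq_zero, isEmpty_subtype]
  refine .inl ?_
  rintro c ⟨a, ha, even_a⟩
  have mem : a ∈ c.blocks := List.mem_of_head? ha
  obtain rfl : a = 1 := (c.blocks_le mem).antisymm (c.one_le_blocks mem)
  exact Nat.not_even_one even_a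

theorem card_hasFirstPart_even_succ (n : ℕ) :
    Nat.card {c : Composition (n + 2) // HasFirstPart Even c} =
      Nat.card {c : Composition (n + 1) // HasFirstPart Odd c} := by
  simpa only [Nat.even_add_one, Nat.not_even_iff_odd] using
    card_hasFirstPart_succ n Nat.not_even_one

theorem three_mul_card_odd_sub_card_even_firstPart (n : ℕ) :
    3 * ((Nat.card {c : Composition (n + 1) // HasFirstPart Odd c} : ℤ) -
      Nat.card {c : Composition (n + 1) // HasFirstPart Even c}) = 2 ^ n + 2 * (-1) ^ n := by
  have total (k : ℕ) : (Nat.card {c : Composition (k + 1) // HasFirstPart Odd c} : ℤ) +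
      Nat.card {c : Composition (k + 1) // HasFirstPart Even c} = 2 ^ k := by
    have := card_hasFirstPart_add_card_hasFirstPart_not k Odd
    simp only [Nat.not_odd_iff_even] at this
    exact_mod_cast this
  induction n with
  | zero =>
    have total_one := total 0
    rw [zero_add, card_hasFirstPart_even_one, Nat.cast_zero, add_zero] at total_one
    rw [zero_add, card_hasFirstPart_even_one, total_one]
    norm_num
  | succ n ih =>
    have total_succ := total (n + 1)
    rw [card_hasFirstPart_even_succ] at total_succ ⊢
    linarith [total n, pow_succ (2 : ℤ) n, pow_succ (-1 : ℤ) n]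

end Compositions

section Walks

variable {V : Type*}

theorem card_smul_adjMatrix_top_pow (R : Type*) [CommRing R] [Fintype V] [DecidableEq V] (n : ℕ) :
    (Fintype.card V : R) • (⊤ : SimpleGraph V).adjMatrix R ^ n =
      ((Fintype.card V - 1 : R) ^ n - (-1) ^ n) • Matrix.of 1 +
        ((Fintype.card V : R) * (-1) ^ n) • (1 : Matrix V V R) := by
  set J : Matrix V V R := Matrix.of 1
  have J_mul_J : J * J = (Fintype.card V : R) • J := by
    ext
    simp [J, Matrix.mul_apply]
  have adjMatrix_eq : (⊤ : SimpleGraph V).adjMatrix R = J - 1 :=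
    SimpleGraph.adjMatrix_completeGraph_eq_of_one_sub_one R V
  induction n with
  | zero => simp
  | succ n ih =>
    rw [pow_succ, ← smul_mul_assoc, ih, adjMatrix_eq]
    simp only [add_mul, mul_sub, smul_mul_assoc, J_mul_J, one_mul, mul_one]
    module

theorem card_mul_card_closed_walk_top [Fintype V] (n : ℕ) (v : V) :
    (Fintype.card V : ℤ) * Nat.card {p : (⊤ : SimpleGraph V).Walk v v // p.length = n} =
      (Fintype.card V - 1 : ℤ) ^ n + (Fintype.card V - 1) * (-1) ^ n := by
  classical
  have diag := congr_fun₂ (card_smul_adjMatrix_top_pow (V := V) ℤ n) v v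
  simp only [Matrix.smul_apply, Matrix.add_apply, Matrix.of_apply, Matrix.one_apply_eq,
    Pi.one_apply, SimpleGraph.adjMatrix_pow_apply_eq_card_walk, smul_eq_mul] at diag
  rw [Nat.card_eq_fintype_card]
  exact diag.trans (by ring)

theorem exists_walk_getVert_eq (G : SimpleGraph V) {n : ℕ} (f : Fin (n + 1) → V)
    (h : ∀ i : Fin n, G.Adj (f i.castSucc) (f i.succ)) :
    ∃ p : G.Walk (f 0) (f (Fin.last n)), p.length = n ∧ ∀ i : Fin (n + 1), p.getVert i = f i := by
  induction n with
  | zero => exact ⟨.nil, rfl, fun i ↦ by simp [Fin.fin_one_eq_zero i]⟩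
  | succ n ih =>
    obtain ⟨p, hlen, hp⟩ := ih (fun i ↦ f i.succ) fun i ↦ h i.succ
    refine ⟨.cons (h 0) p, congrArg (· + 1) hlen, fun i ↦ ?_⟩
    cases i using Fin.cases with
    | zero => rfl
    | succ i => exact hp i

theorem card_walk_eq_card_adj_sequence (G : SimpleGraph V) (n : ℕ) (u v : V) :
    Nat.card {p : G.Walk u v // p.length = n} =
      Nat.card {f : Fin (n + 1) → V // f 0 = u ∧ f (Fin.last n) = v ∧
        ∀ i j : Fin (n + 1), (j : ℕ) = (i : ℕ) + 1 → G.Adj (f i) (f j)} := by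
  refine Nat.card_eq_of_bijective (fun p ↦ ⟨fun i ↦ p.1.getVert i, ?_, ?_, ?_⟩) ⟨?_, ?_⟩
  · simp
  · obtain ⟨p, rfl⟩ := p
    simp
  · obtain ⟨p, rfl⟩ := p
    intro i j hij
    simp only [hij]
    exact p.adj_getVert_succ (by lia)
  · rintro ⟨p, hp⟩ ⟨q, hq⟩ h
    rw [Subtype.mk.injEq, funext_iff] at h
    exact Subtype.ext <| SimpleGraph.Walk.ext_getVert_le_length (hp.trans hq.symm) fun k hk ↦
      h ⟨k, by lia⟩
  · rintro ⟨f, rfl, rfl, hf⟩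
    obtain ⟨p, hlen, hp⟩ := exists_walk_getVert_eq G f fun i ↦ hf _ _ (by simp)
    exact ⟨⟨p, hlen⟩, Subtype.ext (funext hp)⟩

end Walks

/-- For every integer `n ≥ 1`, letting `C_o(n)` (resp. `C_e(n)`)
be the number of compositions of `n` whose first part is odd (resp. even), one
has `C_o(n) - C_e(n) = (2^(n-1) + 2·(-1)^(n-1)) / 3`, which equals the number
of closed walks of length `n - 1` starting and ending at a fixed vertex of the
complete graph `K_3` (encoded as sequences of `n` vertices in `Fin 3` starting
and ending at vertex `0`, with consecutive vertices distinct). -/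
theorem stmt_18 (n : ℕ) (hn : 1 ≤ n) :
    (Nat.card {c : Composition n // ∃ a, c.blocks.head? = some a ∧ Odd a} : ℤ) -
      (Nat.card {c : Composition n // ∃ a, c.blocks.head? = some a ∧ Even a} : ℤ) =
      (2 ^ (n - 1) + 2 * (-1) ^ (n - 1)) / 3 ∧
    (Nat.card {c : Composition n // ∃ a, c.blocks.head? = some a ∧ Odd a} : ℤ) -
      (Nat.card {c : Composition n // ∃ a, c.blocks.head? = some a ∧ Even a} : ℤ) =
      (Nat.card {f : Fin n → Fin 3 //
        f ⟨0, hn⟩ = 0 ∧ f ⟨n - 1, by omega⟩ = 0 ∧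
        ∀ i j : Fin n, (j : ℕ) = (i : ℕ) + 1 → f i ≠ f j} : ℤ) := by
  obtain ⟨m, rfl⟩ := Nat.exists_eq_add_of_le' hn
  have compositions := three_mul_card_odd_sub_card_even_firstPart m
  have walks : 3 * (Nat.card {p : (⊤ : SimpleGraph (Fin 3)).Walk 0 0 // p.length = m} : ℤ) =
      2 ^ m + 2 * (-1) ^ m := card_mul_card_closed_walk_top m (0 : Fin 3)
  rw [card_walk_eq_card_adj_sequence] at walks
  exact ⟨Int.eq_ediv_of_mul_eq_right three_ne_zero compositions,
    mul_left_cancel₀ three_ne_zero (compositions.trans walks.symm)⟩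
end

section
/- For every integer n ≥ 1, the number of Dyck bridges of semi-length n whose first step is an up step and in which every peak other than the first peak has height strictly less than the height of the first peak equals the Catalan number C(2n,n)/(n+1). -/
/-!
A bridge starting with an up step is a word `l = U^(k+1) D v`, whose first peak has height `k + 1`.
Since `v` starts at height `k` and ends at height `0`, the maximum of `v` is attained at its start
or at one of its peaks; so all other peaks lie below the first one exactly when `v` never rises
above its starting height. Reversing the order of the steps of `v` turns this into the condition
that the new path from height `k` to height `0` never falls below its final height, that is, that
the whole word is a Dyck path.
-/

namespace DyckBridge

/-- The altitude reached at the end of a path given as a list of steps. The partial sum `S_i` of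
`l` is `height (l.take i)`. -/
def height (l : List Bool) : ℤ := (l.map stepVal).sum

/-- The list version of `IsPeak`, with the same 0-based position. -/
def IsPeakAt (l : List Bool) (i : ℕ) : Prop := l[i]? = some true ∧ l[i + 1]? = some false

/-- The paths counted by the theorem, except for the condition of ending at altitude `0`: they
start with an up step and their first peak is strictly higher than all the others. -/
def HasHighestFirstPeak (l : List Bool) : Prop :=
  l[0]? = some true ∧ ∃ i, IsPeakAt l i ∧ (∀ j, IsPeakAt l j → i ≤ j) ∧
    ∀ j, IsPeakAt l j → j ≠ i → height (l.take (j + 1)) < height (l.take (i + 1))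

/-- The list version of `IsDyck`. -/
def IsDyckList (l : List Bool) : Prop := height l = 0 ∧ ∀ i, 0 ≤ height (l.take i)

/-- The bijection between the two families of paths: it reverses the order of the steps following
the first down step. -/
def reverseAfterDown : List Bool → List Bool
  | [] => []
  | true :: l => true :: reverseAfterDown l
  | false :: l => false :: l.reverse

@[simp] lemma height_nil : height [] = 0 := rfl

@[simp] lemma height_cons (b : Bool) (l : List Bool) : height (b :: l) = stepVal b + height l := by
  simp [height]

@[simp] lemma height_append (l₁ l₂ : List Bool) : height (l₁ ++ l₂) = height l₁ + height l₂ := by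
  simp [height]

@[simp] lemma height_reverse (l : List Bool) : height l.reverse = height l := by simp [height]

@[simp] lemma height_replicate_true (k : ℕ) : height (List.replicate k true) = k := by
  simp [height, stepVal]

lemma height_take_reverse (l : List Bool) (i : ℕ) :
    height (l.reverse.take i) = height l - height (l.take (l.length - i)) := by
  rw [List.take_reverse, height_reverse, eq_sub_iff_add_eq', ← height_append,
    List.take_append_drop]

lemma height_replicate_true_append (k : ℕ) (v : List Bool) :
    height (List.replicate k true ++ false :: v) = k - 1 + height v := by
  simp only [height_append, height_replicate_true, height_cons, stepVal, Bool.false_eq_true,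
    if_false]
  ring

lemma height_take_replicate_true_append_of_le {k i : ℕ} (h : i ≤ k) (v : List Bool) :
    height ((List.replicate k true ++ false :: v).take i) = i := by
  simp [List.take_append, h]

lemma height_take_replicate_true_append_add (k : ℕ) (v : List Bool) (i : ℕ) :
    height ((List.replicate k true ++ false :: v).take (k + 1 + i)) =
      k - 1 + height (v.take i) := by
  rw [add_assoc, add_comm 1, List.take_append, List.take_of_length_le (by simp),
    List.length_replicate, Nat.add_sub_cancel_left, List.take_succ_cons,
    height_replicate_true_append]

lemma height_take_replicate_true_append_add_lt_iff {k : ℕ} {v : List Bool} {i : ℕ} :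
    height ((List.replicate k true ++ false :: v).take (k + 1 + i)) <
        height ((List.replicate k true ++ false :: v).take k) ↔
      height (v.take i) ≤ 0 := by
  rw [height_take_replicate_true_append_add, height_take_replicate_true_append_of_le le_rfl]
  omega

lemma isPeakAt_replicate_true_append_iff {k : ℕ} {v : List Bool} {j : ℕ} :
    IsPeakAt (List.replicate k true ++ false :: v) j ↔
      j + 1 = k ∨ ∃ i, IsPeakAt v i ∧ j = k + 1 + i := by
  obtain hjk | hkj := le_or_gt j k
  · grind [IsPeakAt]
  · obtain ⟨i, rfl⟩ := Nat.exists_eq_add_of_le hkj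
    have hshift : IsPeakAt (List.replicate k true ++ false :: v) (k + 1 + i) ↔ IsPeakAt v i := by
      grind [IsPeakAt]
    grind

lemma one_le_of_forall_isPeakAt_le {l : List Bool} {c : ℤ} (hl : height (true :: l) ≤ c)
    (hpeak : ∀ i, IsPeakAt (true :: l) i → height ((true :: l).take (i + 1)) ≤ c) : 1 ≤ c := by
  induction l generalizing c with
  | nil => simpa [stepVal] using hl
  | cons b l ih =>
    cases b with
    | false => simpa [stepVal] using hpeak 0 ⟨rfl, rfl⟩
    | true =>
      have : 1 ≤ c - 1 := by
        refine ih ?_ fun i hi => ?_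
        · rw [height_cons] at hl
          simp only [stepVal, if_true] at hl
          linarith
        · have := hpeak (i + 1) hi
          rw [List.take_succ_cons, height_cons] at this
          simp only [stepVal, if_true] at this
          linarith
      linarith

theorem forall_height_take_le_iff {l : List Bool} {c : ℤ} :
    (∀ i, height (l.take i) ≤ c) ↔
      0 ≤ c ∧ height l ≤ c ∧ ∀ i, IsPeakAt l i → height (l.take (i + 1)) ≤ c := by
  refine ⟨fun h => ⟨h 0, by simpa using h l.length, fun i _ => h (i + 1)⟩, ?_⟩
  rintro ⟨hc, hl, hpeak⟩ i
  induction l generalizing c i with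
  | nil => simpa using hc
  | cons b l ih =>
    cases i with
    | zero => simpa using hc
    | succ i =>
      have hb : stepVal b ≤ c := by
        cases b with
        | false => exact le_trans (by decide) hc
        | true => exact one_le_of_forall_isPeakAt_le hl hpeak
      rw [List.take_succ_cons, height_cons, ← le_sub_iff_add_le']
      refine ih (sub_nonneg.2 hb) (by rwa [le_sub_iff_add_le', ← height_cons]) (fun j hj => ?_) i
      rw [le_sub_iff_add_le', ← height_cons, ← List.take_succ_cons]
      exact hpeak (j + 1) hj

lemma exists_eq_replicate_true_append {l : List Bool} (h : false ∈ l) :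
    ∃ k v, l = List.replicate k true ++ false :: v := by
  induction l with
  | nil => simp at h
  | cons b l ih =>
    cases b with
    | false => exact ⟨0, l, rfl⟩
    | true =>
      obtain ⟨k, v, rfl⟩ := ih (by simpa using h)
      exact ⟨k + 1, v, rfl⟩

lemma false_mem_of_height_eq_zero {l : List Bool} (hne : l ≠ []) (hl : height l = 0) :
    false ∈ l := by
  by_contra hmem
  have hrep : l = List.replicate l.length true :=
    List.eq_replicate_iff.2 ⟨rfl, fun b hb => Bool.eq_true_of_not_eq_false (by grind)⟩
  rw [hrep, height_replicate_true] at hl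
  exact hne (List.length_eq_zero_iff.1 (by exact_mod_cast hl))

lemma reverseAfterDown_involutive : Function.Involutive reverseAfterDown := by
  intro l
  induction l with
  | nil => rfl
  | cons b l ih => cases b <;> simp [reverseAfterDown, ih]

lemma length_reverseAfterDown (l : List Bool) : (reverseAfterDown l).length = l.length := by
  induction l with
  | nil => rfl
  | cons b l ih => cases b <;> simp [reverseAfterDown, ih]

lemma height_reverseAfterDown (l : List Bool) : height (reverseAfterDown l) = height l := by
  induction l with
  | nil => rfl
  | cons b l ih => cases b <;> simp [reverseAfterDown, ih]

lemma reverseAfterDown_replicate_true_append (k : ℕ) (v : List Bool) :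
    reverseAfterDown (List.replicate k true ++ false :: v) =
      List.replicate k true ++ false :: v.reverse := by
  induction k with
  | zero => rfl
  | succ k ih => simp [List.replicate_succ, reverseAfterDown, ih]

lemma hasHighestFirstPeak_replicate_true_append_iff {k : ℕ} {v : List Bool}
    (h : height (List.replicate k true ++ false :: v) = 0) :
    HasHighestFirstPeak (List.replicate k true ++ false :: v) ↔
      ∀ i, height (v.take i) ≤ 0 := by
  rw [height_replicate_true_append] at h
  cases k with
  | zero =>
    refine iff_of_false (fun hpeak => by simpa using hpeak.1) fun hv => ?_
    have := hv v.length
    rw [List.take_length] at this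
    push_cast at h
    linarith
  | succ m =>
    have hfirst : IsPeakAt (List.replicate (m + 1) true ++ false :: v) m :=
      isPeakAt_replicate_true_append_iff.2 (.inl rfl)
    have hmin (j : ℕ) (hj : IsPeakAt (List.replicate (m + 1) true ++ false :: v) j) : m ≤ j := by
      obtain hj | ⟨i, -, rfl⟩ := isPeakAt_replicate_true_append_iff.1 hj <;> omega
    rw [forall_height_take_le_iff]
    constructor
    · rintro ⟨-, i, hi, hile, hlt⟩
      obtain rfl : i = m := le_antisymm (hile m hfirst) (hmin i hi)
      refine ⟨le_rfl, by push_cast at h; linarith, fun j hj => ?_⟩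
      rw [← height_take_replicate_true_append_add_lt_iff (k := i + 1)]
      exact hlt (i + 1 + 1 + j) (isPeakAt_replicate_true_append_iff.2 (.inr ⟨j, hj, rfl⟩))
        (by omega)
    · rintro ⟨-, -, hv⟩
      refine ⟨by simp [List.replicate_succ], m, hfirst, hmin, fun j hj hjm => ?_⟩
      obtain hj | ⟨i, hi, rfl⟩ := isPeakAt_replicate_true_append_iff.1 hj
      · omega
      · exact height_take_replicate_true_append_add_lt_iff.2 (hv i hi)

lemma isDyckList_replicate_true_append_reverse_iff {k : ℕ} {v : List Bool}
    (h : height (List.replicate k true ++ false :: v) = 0) :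
    IsDyckList (List.replicate k true ++ false :: v.reverse) ↔
      ∀ i, height (v.take i) ≤ 0 := by
  rw [height_replicate_true_append] at h
  have hsuffix (i : ℕ) :
      height ((List.replicate k true ++ false :: v.reverse).take (k + 1 + i)) =
        -height (v.take (v.length - i)) := by
    rw [height_take_replicate_true_append_add, height_take_reverse]
    linarith
  constructor
  · rintro ⟨-, hnonneg⟩ i
    have htake : v.take i = v.take (v.length - (v.length - i)) :=
      List.take_eq_take_iff.2 (by omega)
    rw [htake, ← neg_nonneg, ← hsuffix]
    exact hnonneg _
  · refine fun hv => ⟨by rwa [height_replicate_true_append, height_reverse], fun i => ?_⟩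
    obtain hi | ⟨j, rfl⟩ : i ≤ k ∨ ∃ j, i = k + 1 + j :=
      (le_or_gt i k).imp_right Nat.exists_eq_add_of_le
    · rw [height_take_replicate_true_append_of_le hi]
      positivity
    · rw [hsuffix, neg_nonneg]
      exact hv _

theorem hasHighestFirstPeak_iff_isDyckList_reverseAfterDown {l : List Bool} (hne : l ≠ []) :
    height l = 0 ∧ HasHighestFirstPeak l ↔ IsDyckList (reverseAfterDown l) := by
  by_cases hl : height l = 0
  · obtain ⟨k, v, rfl⟩ := exists_eq_replicate_true_append (false_mem_of_height_eq_zero hne hl)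
    rw [and_iff_right hl, reverseAfterDown_replicate_true_append,
      hasHighestFirstPeak_replicate_true_append_iff hl,
      isDyckList_replicate_true_append_reverse_iff hl]
  · exact iff_of_false (fun h => hl h.1) fun h => hl (height_reverseAfterDown l ▸ h.1)

/-- Up steps `true` correspond to `U`, down steps `false` to `D`. -/
def boolEquivDyckStep : Bool ≃ DyckStep where
  toFun b := if b then .U else .D
  invFun s := s = .U
  left_inv b := by cases b <;> rfl
  right_inv s := by cases s <;> rfl

lemma height_eq_count_sub_count (l : List Bool) :
    height l = ((l.map boolEquivDyckStep).count .U : ℤ) - (l.map boolEquivDyckStep).count .D := by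
  induction l with
  | nil => rfl
  | cons b l ih => cases b <;> simp [ih, boolEquivDyckStep, stepVal] <;> ring

lemma isDyckList_iff_count {l : List Bool} :
    IsDyckList l ↔
      (l.map boolEquivDyckStep).count .U = (l.map boolEquivDyckStep).count .D ∧
        ∀ i, ((l.map boolEquivDyckStep).take i).count .D ≤
          ((l.map boolEquivDyckStep).take i).count .U := by
  simp only [IsDyckList, height_eq_count_sub_count, List.map_take, sub_eq_zero, sub_nonneg,
    Nat.cast_inj, Nat.cast_le]

/-- Dyck paths as lists of Booleans are Mathlib's Dyck words. -/
def dyckListEquivDyckWord : {l : List Bool // IsDyckList l} ≃ DyckWord where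
  toFun l := ⟨l.1.map boolEquivDyckStep, (isDyckList_iff_count.1 l.2).1,
    (isDyckList_iff_count.1 l.2).2⟩
  invFun p := ⟨p.toList.map boolEquivDyckStep.symm, isDyckList_iff_count.2 <| by
    simpa using ⟨p.count_U_eq_count_D, p.count_D_le_count_U⟩⟩
  left_inv l := by simp
  right_inv p := by simp

theorem card_isDyckList (n : ℕ) :
    Nat.card {l : List Bool // IsDyckList l ∧ l.length = 2 * n} = catalan n := by
  rw [← DyckWord.card_dyckWord_semilength_eq_catalan, ← Nat.card_eq_fintype_card]
  refine Nat.card_congr <| (Equiv.subtypeSubtypeEquivSubtypeInter _ _).symm.trans <|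
    dyckListEquivDyckWord.subtypeEquiv fun l => ?_
  have hlength := (dyckListEquivDyckWord l).two_mul_semilength_eq_length
  rw [show (dyckListEquivDyckWord l).toList.length = l.1.length from List.length_map _] at hlength
  omega

theorem card_hasHighestFirstPeak {n : ℕ} (hn : 1 ≤ n) :
    Nat.card {l : List Bool // (height l = 0 ∧ HasHighestFirstPeak l) ∧ l.length = 2 * n} =
      catalan n := by
  rw [← card_isDyckList]
  refine Nat.card_congr (reverseAfterDown_involutive.toPerm.subtypeEquiv fun l => ?_)
  rw [Function.Involutive.coe_toPerm, length_reverseAfterDown]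
  refine and_congr_left fun hlength =>
    hasHighestFirstPeak_iff_isDyckList_reverseAfterDown ?_
  rintro rfl
  rw [List.length_nil] at hlength
  omega

lemma card_subtype_ofFn {α : Type*} (L : ℕ) (p : List α → Prop) :
    Nat.card {w : Fin L → α // p (List.ofFn w)} =
      Nat.card {l : List α // p l ∧ l.length = L} := by
  simp only [and_comm (a := p _)]
  exact Nat.card_congr <| ((Equiv.vectorEquivFin α L).symm.subtypeEquiv fun w => by
    rw [← List.Vector.toList_ofFn]; rfl).trans <|
      Equiv.subtypeSubtypeEquivSubtypeInter (fun l : List α => l.length = L) p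

lemma getElem?_ofFn_eq_some_iff {α : Type*} {L : ℕ} {w : Fin L → α} {i : ℕ} {a : α} :
    (List.ofFn w)[i]? = some a ↔ ∃ j : Fin L, (j : ℕ) = i ∧ w j = a := by
  simp [Fin.exists_iff]

section Words

variable {L : ℕ} (w : Fin L → Bool)

lemma psum_eq_height_take_ofFn (i : ℕ) : psum w i = height ((List.ofFn w).take i) := by
  rw [psum, height, List.map_take, List.map_ofFn, List.sum_take_ofFn, Finset.sum_filter]
  rfl

lemma isPeak_iff_isPeakAt_ofFn {i : ℕ} : IsPeak w i ↔ IsPeakAt (List.ofFn w) i := by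
  simp only [IsPeakAt, getElem?_ofFn_eq_some_iff, IsPeak]
  grind

lemma isBridge_iff_height_ofFn : IsBridge w ↔ height (List.ofFn w) = 0 := by
  rw [IsBridge, psum_eq_height_take_ofFn, List.take_of_length_le (by simp)]

lemma hasHighestFirstPeak_ofFn_iff :
    HasHighestFirstPeak (List.ofFn w) ↔
      (∃ j : Fin L, (j : ℕ) = 0 ∧ w j = true) ∧
        ∃ i : ℕ, IsPeak w i ∧ (∀ j : ℕ, IsPeak w j → i ≤ j) ∧
          ∀ j : ℕ, IsPeak w j → j ≠ i → peakHeight w j < peakHeight w i := by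
  simp only [HasHighestFirstPeak, getElem?_ofFn_eq_some_iff, isPeak_iff_isPeakAt_ofFn, peakHeight,
    psum_eq_height_take_ofFn]

end Words

end DyckBridge

/-- For every integer `n ≥ 1`, the number of Dyck bridges of
semi-length `n` whose first step is an up step and in which every peak other
than the first peak has height strictly less than the height of the first peak
equals the Catalan number `C(2n, n) / (n + 1)`. -/
theorem stmt_19 (n : ℕ) (hn : 1 ≤ n) :
    Nat.card {w : Fin (2 * n) → Bool // IsBridge w ∧
        (∃ j : Fin (2 * n), (j : ℕ) = 0 ∧ w j = true) ∧
        ∃ i : ℕ, IsPeak w i ∧ (∀ j : ℕ, IsPeak w j → i ≤ j) ∧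
          ∀ j : ℕ, IsPeak w j → j ≠ i → peakHeight w j < peakHeight w i} =
      Nat.choose (2 * n) n / (n + 1) := by
  simp only [← DyckBridge.hasHighestFirstPeak_ofFn_iff, DyckBridge.isBridge_iff_height_ofFn]
  calc
    _ = Nat.card {l : List Bool //
          (DyckBridge.height l = 0 ∧ DyckBridge.HasHighestFirstPeak l) ∧ l.length = 2 * n} :=
      DyckBridge.card_subtype_ofFn (2 * n)
        fun l => DyckBridge.height l = 0 ∧ DyckBridge.HasHighestFirstPeak l
    _ = catalan n := DyckBridge.card_hasHighestFirstPeak hn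
    _ = Nat.choose (2 * n) n / (n + 1) := catalan_eq_centralBinom_div n
end
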